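/- (Cyclicity of the Carathéodory example) For ρ, δ > 0, with α = 1/(2+δ) and γ = ρ^{−α}, the moments a_n = ∫_0^∞ x^n e^{−γ x^α} dx satisfy: for every t ∈ (−1, 1), a_n = ∫_0^∞ x^n (1 + t·sin(γ x^α tan(πα))) e^{−γ x^α} dx for all n ≥ 0. In particular the Stieltjes moment problem for (a_n) is indeterminate. -/

import Mathlib

open MeasureTheory

namespace Carath

/-- The measure `x^n dx` on the half line. -/
noncomputable def base (n : ℕ) : Measure ℝ :=
  (volume.restrict (Set.Ioi 0)).withDensity (fun x => ((x ^ n).toNNReal : ENNReal))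

lemma integral_base {E : Type*} [NormedAddCommGroup E] [NormedSpace ℝ E] (n : ℕ) (g : ℝ → E) :
    ∫ x, g x ∂(base n) = ∫ x in Set.Ioi (0 : ℝ), x ^ n • g x := by
  unfold base
  rw [integral_withDensity_eq_integral_smul (by fun_prop)]
  refine setIntegral_congr_fun measurableSet_Ioi fun x hx => ?_
  have hx' : 0 < x := hx
  simp only [NNReal.smul_def]
  rw [Real.coe_toNNReal _ (by positivity)]

lemma integrable_base {α b : ℝ} (hα : 0 < α) (hb : 0 < b) (n : ℕ) :
    IntegrableOn (fun x : ℝ => x ^ n * Real.exp (-b * x ^ α)) (Set.Ioi 0) := by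
  have := integrableOn_rpow_mul_exp_neg_mul_rpow (p := α) (s := n) (b := b)
    (by have : (0 : ℝ) ≤ n := n.cast_nonneg
        linarith) hα hb
  simpa using this

lemma mem_expSet {α b : ℝ} (hα : 0 < α) (hb : 0 < b) (n : ℕ) :
    -b ∈ ProbabilityTheory.integrableExpSet (fun x : ℝ => x ^ α) (base n) := by
  have h := integrable_base hα hb n
  unfold ProbabilityTheory.integrableExpSet base
  rw [Set.mem_ofPred_eq, integrable_withDensity_iff_integrable_smul (by fun_prop)]
  refine IntegrableOn.congr_fun h (fun x hx => ?_) measurableSet_Ioi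
  have hx' : 0 < x := hx
  simp only [NNReal.smul_def]
  rw [Real.coe_toNNReal _ (by positivity)]
  simp

lemma key {α : ℝ} (hα : 0 < α) (n : ℕ) {z : ℂ} (hz : z.re < 0) :
    ProbabilityTheory.complexMGF (fun x : ℝ => x ^ α) (base n) z =
      (-z) ^ (((-(n + 1) / α : ℝ)) : ℂ) * (((1 / α) * Real.Gamma ((n + 1) / α) : ℝ) : ℂ) := by
  have hsub : Set.Iio (0 : ℝ) ⊆
      interior (ProbabilityTheory.integrableExpSet (fun x : ℝ => x ^ α) (base n)) := by
    refine interior_maximal (fun s hs => ?_) isOpen_Iio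
    have := mem_expSet hα (neg_pos.mpr hs) n
    simpa using this
  have hf : AnalyticOnNhd ℂ (ProbabilityTheory.complexMGF (fun x : ℝ => x ^ α) (base n))
      {z : ℂ | z.re < 0} := fun w hw =>
    ProbabilityTheory.analyticAt_complexMGF (hsub hw)
  have hg : AnalyticOnNhd ℂ (fun z : ℂ => (-z) ^ (((-(n + 1) / α : ℝ)) : ℂ) *
      (((1 / α) * Real.Gamma ((n + 1) / α) : ℝ) : ℂ)) {z : ℂ | z.re < 0} := by
    intro w hw
    have hw' : w.re < 0 := hw
    refine (AnalyticAt.cpow (by fun_prop) (by fun_prop) ?_).mul (by fun_prop)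
    left
    simpa using hw'
  refine hf.eqOn_of_preconnected_of_frequently_eq (z₀ := ((-1 : ℝ) : ℂ)) hg
    (convex_halfSpace_re_lt 0).isPreconnected (by simp) ?_ hz
  have ht : Filter.Tendsto (fun s : ℝ => (s : ℂ)) (nhdsWithin (-1) {-1}ᶜ)
      (nhdsWithin ((-1 : ℝ) : ℂ) {((-1 : ℝ) : ℂ)}ᶜ) := by
    refine tendsto_nhdsWithin_of_tendsto_nhds_of_eventually_within _
      (Complex.continuous_ofReal.continuousAt.tendsto.mono_left nhdsWithin_le_nhds) ?_
    filter_upwards [self_mem_nhdsWithin] with s hs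
    simpa only [Set.mem_compl_iff, Set.mem_singleton_iff, Complex.ofReal_inj] using hs
  refine ht.frequently (Filter.Eventually.frequently ?_)
  have : ∀ᶠ s : ℝ in nhdsWithin (-1) {-1}ᶜ, s < 0 :=
    nhdsWithin_le_nhds (Iio_mem_nhds (by norm_num))
  filter_upwards [this] with s hs
  rw [ProbabilityTheory.complexMGF_ofReal, ProbabilityTheory.mgf, integral_base]
  have h1 := integral_rpow_mul_exp_neg_mul_rpow (p := α) (q := n) (b := -s) hα
    (by have : (0 : ℝ) ≤ n := n.cast_nonneg
        linarith) (neg_pos.mpr hs)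
  simp only [Real.rpow_natCast, neg_neg] at h1
  simp only [smul_eq_mul]
  rw [h1, ← Complex.ofReal_neg, ← Complex.ofReal_cpow (by linarith), ← Complex.ofReal_mul, mul_assoc]

lemma vanish {α γ : ℝ} (hα : 0 < α) (hα2 : α < 1 / 2) (hγ : 0 < γ) (n : ℕ) :
    ∫ x in Set.Ioi (0 : ℝ), x ^ n * (Real.sin (γ * x ^ α * Real.tan (Real.pi * α)) *
      Real.exp (-γ * x ^ α)) = 0 := by
  have hpi := Real.pi_pos
  have hcos : 0 < Real.cos (Real.pi * α) :=
    Real.cos_pos_of_mem_Ioo ⟨by nlinarith, by nlinarith⟩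
  set T := Real.tan (Real.pi * α) with hT
  set z : ℂ := (-γ : ℝ) + (γ * T : ℝ) * Complex.I with hz
  have hk := key hα n (z := z) (by simp [hz, hγ])
  have hint : Integrable (fun x : ℝ => x ^ n • Complex.exp (z * ((x ^ α : ℝ) : ℂ)))
      (volume.restrict (Set.Ioi 0)) := by
    refine (integrable_base hα hγ n).mono' (by fun_prop) ?_
    filter_upwards [ae_restrict_mem measurableSet_Ioi] with x hx
    have hx' : 0 < x := hx
    rw [norm_smul, Complex.norm_exp, Real.norm_of_nonneg (by positivity)]
    simp [hz]
  have hmz : -z = ((γ / Real.cos (Real.pi * α) : ℝ) : ℂ) *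
      (Complex.cos ((-(Real.pi * α) : ℝ) : ℂ) + Complex.sin ((-(Real.pi * α) : ℝ) : ℂ) * Complex.I) := by
    rw [← Complex.ofReal_cos, ← Complex.ofReal_sin, Real.cos_neg, Real.sin_neg, hz, hT,
      Real.tan_eq_sin_div_cos]
    have hc := hcos.ne'
    clear_value z T
    generalize Real.cos (Real.pi * α) = C at hc
    generalize Real.sin (Real.pi * α) = S
    have hc' : (C : ℂ) ≠ 0 := by exact_mod_cast hc
    push_cast
    field_simp
    ring
  have harg : Complex.arg (-z) = -(Real.pi * α) := by
    rw [hmz]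
    exact Complex.arg_mul_cos_add_sin_mul_I (by positivity) ⟨by nlinarith, by nlinarith⟩
  have him : (ProbabilityTheory.complexMGF (fun x : ℝ => x ^ α) (base n) z).im = 0 := by
    rw [hk, Complex.im_mul_ofReal, Complex.cpow_ofReal_im, harg]
    have : -(Real.pi * α) * (-(n + 1) / α) = ((n + 1 : ℕ) : ℝ) * Real.pi := by
      push_cast
      field_simp
    rw [this, Real.sin_nat_mul_pi]
    simp
  rw [ProbabilityTheory.complexMGF, integral_base] at him
  have h2 := integral_im (𝕜 := ℂ) hint
  simp only [RCLike.im_to_complex] at h2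
  rw [him] at h2
  refine Eq.trans ?_ h2
  refine setIntegral_congr_fun measurableSet_Ioi fun x hx => ?_
  simp only [Complex.real_smul, Complex.im_ofReal_mul, Complex.exp_im]
  have e1 : (z * ((x ^ α : ℝ) : ℂ)).re = -γ * x ^ α := by simp [hz]
  have e2 : (z * ((x ^ α : ℝ) : ℂ)).im = γ * x ^ α * T := by simp [hz]; ring
  rw [e1, e2, mul_comm (Real.exp _)]

lemma moments {α γ : ℝ} (hα : 0 < α) (hα2 : α < 1 / 2) (hγ : 0 < γ) (t : ℝ) (n : ℕ) :
    (∫ x in Set.Ioi (0 : ℝ), x ^ n * Real.exp (-γ * x ^ α)) =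
      ∫ x in Set.Ioi (0 : ℝ),
        x ^ n * (1 + t * Real.sin (γ * x ^ α * Real.tan (Real.pi * α))) *
          Real.exp (-γ * x ^ α) := by
  have hI := integrable_base hα hγ n
  have hJ : IntegrableOn (fun x : ℝ => x ^ n * (Real.sin (γ * x ^ α * Real.tan (Real.pi * α)) *
      Real.exp (-γ * x ^ α))) (Set.Ioi 0) := by
    refine hI.mono' (by fun_prop) ?_
    filter_upwards [ae_restrict_mem measurableSet_Ioi] with x hx
    have hx' : 0 < x := hx
    rw [norm_mul, norm_mul, Real.norm_of_nonneg (by positivity : 0 ≤ x ^ n), Real.norm_eq_abs,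
      Real.norm_of_nonneg (Real.exp_pos _).le]
    have := Real.abs_sin_le_one (γ * x ^ α * Real.tan (Real.pi * α))
    have h3 := Real.exp_pos (-γ * x ^ α)
    gcongr
    nlinarith
  have : (fun x : ℝ => x ^ n * (1 + t * Real.sin (γ * x ^ α * Real.tan (Real.pi * α))) *
          Real.exp (-γ * x ^ α)) = fun x => x ^ n * Real.exp (-γ * x ^ α) +
          t * (x ^ n * (Real.sin (γ * x ^ α * Real.tan (Real.pi * α)) *
            Real.exp (-γ * x ^ α))) := by
    ext x; ring
  rw [this, integral_add hI (hJ.const_mul t), integral_const_mul, vanish hα hα2 hγ n]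
  simp

/-- The measure with density `(1 + t sin(γ x^α tan(πα))) e^{-γ x^α}` on the half line. -/
noncomputable def meas (α γ t : ℝ) : Measure ℝ :=
  (volume.restrict (Set.Ioi 0)).withDensity (fun x =>
    (((1 + t * Real.sin (γ * x ^ α * Real.tan (Real.pi * α))) *
      Real.exp (-γ * x ^ α)).toNNReal : ENNReal))

lemma dens_pos (t : ℝ) (ht : t ∈ Set.Ioo (-1 : ℝ) 1) (s u : ℝ) :
    0 < (1 + t * Real.sin s) * Real.exp u := by
  have : 0 < 1 + t * Real.sin s := by
    have h3 : |t| < 1 := abs_lt.mpr ht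
    have h4 : |t * Real.sin s| ≤ |t| := by
      rw [abs_mul]
      exact mul_le_of_le_one_right (abs_nonneg _) (Real.abs_sin_le_one s)
    have h5 := neg_abs_le (t * Real.sin s)
    linarith
  positivity

lemma meas_moment {α γ : ℝ} (hα : 0 < α) (hα2 : α < 1 / 2) (hγ : 0 < γ) (t : ℝ)
    (ht : t ∈ Set.Ioo (-1 : ℝ) 1) (n : ℕ) :
    (∫ x, x ^ n ∂(meas α γ t)) = ∫ x in Set.Ioi (0 : ℝ), x ^ n * Real.exp (-γ * x ^ α) := by
  rw [moments hα hα2 hγ t n, meas, integral_withDensity_eq_integral_smul (by fun_prop)]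
  refine setIntegral_congr_fun measurableSet_Ioi fun x hx => ?_
  simp only [NNReal.smul_def]
  rw [Real.coe_toNNReal _ (dens_pos t ht _ _).le, smul_eq_mul]
  ring

lemma meas_neg (α γ t : ℝ) : meas α γ t (Set.Iio 0) = 0 := by
  refine withDensity_absolutelyContinuous _ _ ?_
  rw [Measure.restrict_apply measurableSet_Iio]
  have : Set.Iio (0 : ℝ) ∩ Set.Ioi 0 = ∅ := by
    ext x; simp; intro h; exact h.le
  simp [this]

lemma meas_ne {α γ : ℝ} (hα : 0 < α) (hα2 : α < 1 / 2) (hγ : 0 < γ) :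
    meas α γ 0 ≠ meas α γ (1 / 2) := by
  intro h
  unfold meas at h
  rw [withDensity_eq_iff_of_sigmaFinite (by fun_prop) (by fun_prop)] at h
  have hpi := Real.pi_pos
  have hT : 0 < Real.tan (Real.pi * α) :=
    Real.tan_pos_of_pos_of_lt_pi_div_two (by positivity) (by nlinarith)
  set T := Real.tan (Real.pi * α)
  set c : ℝ := (Real.pi / (γ * T)) ^ α⁻¹
  have hc : 0 < c := by positivity
  have h' := (ae_restrict_iff' measurableSet_Ioi).mp h
  have hn : ∀ᵐ x : ℝ, x ∉ Set.Ioo 0 c := by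
    filter_upwards [h'] with x hx hxc
    have hx0 : 0 < x := hxc.1
    have h1 := hx hxc.1
    have h2 : x ^ α < Real.pi / (γ * T) := by
      have := Real.rpow_lt_rpow hx0.le hxc.2 hα
      rwa [Real.rpow_inv_rpow (by positivity) hα.ne'] at this
    have hxa : 0 < x ^ α := by positivity
    rw [lt_div_iff₀ (by positivity)] at h2
    have h3 : 0 < Real.sin (γ * x ^ α * T) :=
      Real.sin_pos_of_pos_of_lt_pi (by positivity) (by nlinarith)
    simp only [ENNReal.coe_inj] at h1
    have h4 := congrArg NNReal.toReal h1
    rw [Real.coe_toNNReal _ (dens_pos 0 (by norm_num) _ _).le,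
      Real.coe_toNNReal _ (dens_pos (1 / 2) (by norm_num) _ _).le] at h4
    have h5 := mul_right_cancel₀ (Real.exp_pos _).ne' h4
    linarith
  have h0 : volume (Set.Ioo (0 : ℝ) c) = 0 := by
    exact measure_eq_zero_iff_ae_notMem.mpr hn
  rw [Real.volume_Ioo] at h0
  simp at h0
  linarith

end Carath

theorem stmt_12 (ρ δ α γ : ℝ) (hρ : 0 < ρ) (hδ : 0 < δ)
    (hα : α = 1 / (2 + δ)) (hγ : γ = ρ ^ (-α)) :
    (∀ t ∈ Set.Ioo (-1 : ℝ) 1, ∀ n : ℕ,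
      (∫ x in Set.Ioi (0 : ℝ), x ^ n * Real.exp (-γ * x ^ α)) =
      ∫ x in Set.Ioi (0 : ℝ),
        x ^ n * (1 + t * Real.sin (γ * x ^ α * Real.tan (Real.pi * α))) *
          Real.exp (-γ * x ^ α)) ∧
    ∃ μ ν : Measure ℝ, μ ≠ ν ∧ μ (Set.Iio 0) = 0 ∧ ν (Set.Iio 0) = 0 ∧
      (∀ n : ℕ, (∫ x, x ^ n ∂μ) = ∫ x in Set.Ioi (0 : ℝ), x ^ n * Real.exp (-γ * x ^ α)) ∧
      (∀ n : ℕ, (∫ x, x ^ n ∂ν) = ∫ x in Set.Ioi (0 : ℝ), x ^ n * Real.exp (-γ * x ^ α)) := by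
  have h0 : 0 < α := by rw [hα]; positivity
  have h1 : α < 1 / 2 := by
    rw [hα]
    exact one_div_lt_one_div_of_lt (by norm_num) (by linarith)
  have h2 : 0 < γ := by rw [hγ]; positivity
  exact ⟨fun t _ n => Carath.moments h0 h1 h2 t n, Carath.meas α γ 0, Carath.meas α γ (1 / 2),
    Carath.meas_ne h0 h1 h2, Carath.meas_neg _ _ _, Carath.meas_neg _ _ _,
    fun n => Carath.meas_moment h0 h1 h2 0 (by norm_num) n,
    fun n => Carath.meas_moment h0 h1 h2 (1 / 2) (by norm_num) n⟩
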